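/- Let p be a prime, V a p-torsion-free valuation domain of Krull dimension 1 that is Witt-perfect and admits a compatible system of p-power roots p^{1/p^n} ∈ V, and A a p-torsion-free flat V-algebra with a nonzero divisor g ∈ A admitting a compatible system of p-power roots g^{1/p^n} ∈ A. Assume: (1) p lies in the Jacobson radical of A and A is completely integrally closed in A[1/p]; (2) A is (pg)^{1/p^∞}-almost Witt-perfect and is integral over a Noetherian subring; (3) (p,g) is a regular sequence on A. For each j > 0 let A[(p^j/g)^{1/p^∞}] denote the A-subalgebra of A[1/(pg)] generated by the elements (p^{1/p^n})^j·(g^{1/p^n})^{-1} for all n ≥ 0. Then for each j > 0 the inclusion A[(p^j/g)^{1/p^∞}] ⊆ A^{j∘} is a (pg)^{1/p^∞}-almost isomorphism: A[(p^j/g)^{1/p^∞}] ⊆ A^{j∘} and (pg)^{1/p^n}·A^{j∘} ⊆ A[(p^j/g)^{1/p^∞}] for every n > 0. -/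

import Mathlib

/-- An element `x` of an `R`-algebra `B` is almost integral over `R` if all its powers lie in a
single finitely generated `R`-submodule of `B`. -/
def IsAlmostIntegralElem (R : Type*) {B : Type*} [CommRing R] [CommRing B] [Algebra R B]
    (x : B) : Prop :=
  ∃ M : Submodule R B, M.FG ∧ ∀ n : ℕ, x ^ n ∈ M

/-- `R` is completely integrally closed in the `R`-algebra `B` if every element of `B` that is
almost integral over `R` lies in the image of `R`. -/
def IsCompletelyIntegrallyClosedIn (R B : Type*) [CommRing R] [CommRing B] [Algebra R B] : Prop :=
  ∀ x : B, IsAlmostIntegralElem R x → x ∈ (algebraMap R B).range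

/-- A `p`-torsion-free ring `A` is Witt-perfect if the Frobenius endomorphism of `A/pA` is
surjective and for every `a ∈ A` there is `b ∈ A` with `b^p ≡ p·a (mod p²A)`. -/
def IsWittPerfect (p : ℕ) (A : Type*) [CommRing A] : Prop :=
  (∀ a : A, ∃ b c : A, a - b ^ p = p * c) ∧
  (∀ a : A, ∃ b c : A, b ^ p - p * a = (p : A) ^ 2 * c)

/-- `(pg)^{1/p^∞}`-almost Witt-perfectness, where `pga n` denotes
`(pg)^{1/p^n} = p^{1/p^n}·g^{1/p^n}`. -/
def IsAlmostWittPerfect (p : ℕ) {A : Type*} [CommRing A] (pga : ℕ → A) : Prop :=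
  (∀ a : A, ∀ n : ℕ, 0 < n → ∃ b c : A, pga n * a - b ^ p = p * c) ∧
  (∀ a : A, ∀ n : ℕ, 0 < n → ∃ b c : A, b ^ p - p * (pga n * a) = (p : A) ^ 2 * c)

theorem aux_add_pow (p : ℕ) (hp : p.Prime) {A : Type*} [CommRing A] (x y : A) :
    ∃ c, (x + y) ^ p = x ^ p + y ^ p + p * c := by
  have h := add_pow_prime_eq hp x y
  rw [mul_assoc (p : A), mul_assoc (p : A)] at h
  exact ⟨_, h⟩

open Polynomial in
theorem aux_frob (p : ℕ) (hp : p.Prime) {A : Type*} [CommRing A] (F : A[X]) :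
    ∃ G H : A[X], F ^ p = expand A p G + C (p : A) * H ∧
      ∀ i, ∃ c, G.coeff i = F.coeff i ^ p + p * c := by
  induction F using Polynomial.induction_on' with
  | add P Q hP hQ =>
    obtain ⟨G, H, h1, h2⟩ := hP
    obtain ⟨G', H', h1', h2'⟩ := hQ
    obtain ⟨r, h3⟩ := aux_add_pow p hp P Q
    refine ⟨G + G', H + H' + r, ?_, ?_⟩
    · rw [h3, h1, h1', map_add]
      simp only [map_natCast]
      ring
    · intro i
      obtain ⟨c, hc⟩ := h2 i
      obtain ⟨c', hc'⟩ := h2' i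
      obtain ⟨r', h4⟩ := aux_add_pow p hp (P.coeff i) (Q.coeff i)
      refine ⟨c + c' - r', ?_⟩
      rw [coeff_add, coeff_add, h4, hc, hc']
      ring
  | monomial n a =>
    refine ⟨monomial n (a ^ p), 0, ?_, ?_⟩
    · rw [expand_monomial, monomial_pow]; simp
    · intro i
      refine ⟨0, ?_⟩
      rw [coeff_monomial, coeff_monomial]
      split_ifs <;> simp [hp.ne_zero]

theorem aux_sub_pow (p : ℕ) (hp : p.Prime) {A : Type*} [CommRing A] (x y : A) :
    ∃ c, (x - y) ^ p = x ^ p - y ^ p + p * c := by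
  obtain ⟨r, h⟩ := aux_add_pow p hp (x - y) y
  rw [sub_add_cancel] at h
  refine ⟨-r, ?_⟩
  rw [h]; ring

theorem aux_root {A Ap : Type*} [CommRing A] [CommRing Ap] [Algebra A Ap] (p : ℕ) (hp : p.Prime)
    [IsLocalization.Away (p : A) Ap] (hAtf : (p : A) ∈ nonZeroDivisors A)
    (hcic : IsCompletelyIntegrallyClosedIn A Ap) (w : A) (hw : w ^ p = p) (a : A)
    (ha : (p : A) ∣ a ^ p) : w ∣ a := by
  have hinj : Function.Injective (algebraMap A Ap) :=
    IsLocalization.injective Ap (Submonoid.powers_le.mpr hAtf)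
  have hpu : IsUnit (algebraMap A Ap (p : A)) := IsLocalization.Away.algebraMap_isUnit (p : A)
  have hwu : IsUnit (algebraMap A Ap w) := by
    rw [← hw, map_pow] at hpu
    exact (isUnit_pow_iff hp.ne_zero).1 hpu
  obtain ⟨u, hu⟩ := hwu
  obtain ⟨b, hb⟩ := ha
  obtain ⟨z, hz⟩ : ∃ z : Ap, z = ↑u⁻¹ * algebraMap A Ap a := ⟨_, rfl⟩
  have hzw : algebraMap A Ap w * z = algebraMap A Ap a := by
    rw [hz, ← hu]; simp
  have hzp : z ^ p = algebraMap A Ap b := by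
    apply hpu.mul_left_cancel
    rw [← map_mul, ← hb, map_pow, ← hzw, mul_pow, ← map_pow, hw]
  have hint : IsIntegral A z := IsIntegral.of_pow hp.pos (hzp ▸ isIntegral_algebraMap)
  obtain ⟨y, hy⟩ := hcic z ⟨Subalgebra.toSubmodule (Algebra.adjoin A {z}),
    hint.fg_adjoin_singleton, fun n => pow_mem (Algebra.self_mem_adjoin_singleton A z) n⟩
  refine ⟨y, hinj ?_⟩
  rw [map_mul, hy, hzw]

open Polynomial in
theorem aux_clear {A B : Type*} [CommRing A] [CommRing B] [Algebra A B] (u v : A) (t : B)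
    (ht : algebraMap A B u * t = algebraMap A B v) (P : A[X]) :
    ∃ N : ℕ, ∃ a : A, algebraMap A B u ^ N * aeval t P = algebraMap A B a := by
  induction P using Polynomial.induction_on' with
  | add P Q hP hQ =>
    obtain ⟨N, a, h⟩ := hP
    obtain ⟨M, b, h'⟩ := hQ
    refine ⟨N + M, u ^ M * a + u ^ N * b, ?_⟩
    simp only [map_add, map_mul, map_pow, ← h, ← h']
    ring
  | monomial n a =>
    refine ⟨n, v ^ n * a, ?_⟩
    rw [aeval_monomial, map_mul, map_pow, ← ht]
    ring

open Polynomial in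
theorem aux_ker {A B : Type*} [CommRing A] [CommRing B] [Algebra A B] (u v : A) (t : B)
    (hinj : Function.Injective (algebraMap A B)) (htu : IsUnit t)
    (ht : algebraMap A B u * t = algebraMap A B v)
    (hreg : ∀ x, v ∣ u * x → v ∣ x) (d : ℕ) : ∀ (P : A[X]), P.natDegree ≤ d → aeval t P = 0 →
    (C u * X - C v) ∣ P := by
  have hreg' : ∀ (N : ℕ) x, v ∣ u ^ N * x → v ∣ x := by
    intro N
    induction N with
    | zero => intro x h; simpa using h
    | succ N ih => intro x h; apply ih; apply hreg; rwa [pow_succ', mul_assoc] at h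
  induction d with
  | zero =>
    intro P hd hP
    rw [Polynomial.eq_C_of_natDegree_le_zero hd] at hP ⊢
    rw [aeval_C] at hP
    rw [(map_eq_zero_iff _ hinj).1 hP]
    simp
  | succ d ih =>
    intro P hd hP
    obtain ⟨N, a, h⟩ := aux_clear u v t ht P.divX
    have hP' := hP
    rw [← Polynomial.divX_mul_X_add P] at hP'
    simp only [map_add, map_mul, aeval_X, aeval_C] at hP'
    have h1 : v ∣ P.coeff 0 := by
      apply hreg' (N + 1)
      refine ⟨-a, hinj ?_⟩
      rw [map_mul, map_mul, map_pow, map_neg, ← h, ← ht]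
      linear_combination (algebraMap A B u) ^ (N + 1) * hP'
    obtain ⟨c, hc⟩ := h1
    have h2 : (C u * X - C v) ∣ P.divX + C (c * u) := by
      apply ih
      · apply (natDegree_add_le _ _).trans
        rw [natDegree_C, natDegree_divX_eq_natDegree_tsub_one]
        omega
      · apply htu.mul_right_cancel
        rw [hc, map_mul, ← ht] at hP'
        simp only [map_add, aeval_C, map_mul]
        linear_combination hP'
    obtain ⟨Q, hQ⟩ := h2
    refine ⟨X * Q - C c, ?_⟩
    conv_lhs => rw [← Polynomial.divX_mul_X_add P, hc]
    rw [map_mul] at hQ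
    rw [map_mul]
    linear_combination X * hQ

theorem aux_pow {M : Type*} [Monoid M] (p : ℕ) (w : ℕ → M) (hw : ∀ n, w (n + 1) ^ p = w n)
    (l n : ℕ) : w (n + l) ^ p ^ l = w n := by
  induction l with
  | zero => simp
  | succ l ih => rw [pow_succ', pow_mul, ← add_assoc, hw, ih]

theorem aux_reg {A : Type*} [CommRing A] (p : ℕ) (w gr : ℕ → A) (hw0 : w 0 = p)
    (hw : ∀ n, w (n + 1) ^ p = w n) (hgr : ∀ n, gr (n + 1) ^ p = gr n) (hp : p.Prime)
    (hAtf : (p : A) ∈ nonZeroDivisors A) (hreg : ∀ x : A, (p : A) ∣ gr 0 * x → (p : A) ∣ x)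
    (j n : ℕ) (x : A) (hx : w n ^ j ∣ gr n * x) : w n ^ j ∣ x := by
  have h1 : ∀ (j : ℕ) (x : A), (p : A) ^ j ∣ gr 0 * x → (p : A) ^ j ∣ x := by
    intro j
    induction j with
    | zero => intro x _; simp
    | succ j ih =>
      intro x hx
      obtain ⟨y, rfl⟩ := hreg x ((dvd_pow_self _ (by omega)).trans hx)
      rw [pow_succ']
      apply mul_dvd_mul_left
      apply ih
      obtain ⟨z, hz⟩ := hx
      refine ⟨z, ?_⟩
      exact sub_eq_zero.1 (mem_nonZeroDivisors_iff_right.1 hAtf _ (by linear_combination hz))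
  have hwn : w n ^ p ^ n = p := by have := aux_pow p w hw n 0; rwa [zero_add, hw0] at this
  have hgn : gr n ^ p ^ n = gr 0 := by have := aux_pow p gr hgr n 0; rwa [zero_add] at this
  have hpos : 0 < p ^ n := pow_pos hp.pos n
  have hwnz : w n ^ j ∈ nonZeroDivisors A := by
    have : w n ^ p ^ n ∈ nonZeroDivisors A := hwn ▸ hAtf
    refine pow_mem (mem_nonZeroDivisors_iff_right.2 fun a ha => ?_) j
    apply mem_nonZeroDivisors_iff_right.1 this
    obtain ⟨e, he⟩ : ∃ e, p ^ n = e + 1 := ⟨p ^ n - 1, by omega⟩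
    rw [he, pow_succ', ← mul_assoc, ha, zero_mul]
  obtain ⟨e, he⟩ : ∃ e, p ^ n = e + 1 := ⟨p ^ n - 1, by omega⟩
  have hpj : (p : A) ^ j = (w n ^ j) ^ e * w n ^ j := by rw [← pow_succ, ← he, ← hwn, pow_right_comm]
  have h2 : (p : A) ^ j ∣ (w n ^ j) ^ e * x := by
    apply h1
    obtain ⟨y, hy⟩ := hx
    refine ⟨gr n ^ e * y, ?_⟩
    rw [hpj, ← hgn, he]
    linear_combination (w n ^ j) ^ e * gr n ^ e * hy
  obtain ⟨y, hy⟩ := h2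
  refine ⟨y, ?_⟩
  have h3 := mem_nonZeroDivisors_iff_right.1 (pow_mem hwnz e) (x - w n ^ j * y) (by
    rw [hpj] at hy; linear_combination hy)
  exact sub_eq_zero.1 h3

open Polynomial in
theorem aux_K {A B : Type*} [CommRing A] [CommRing B] [Algebra A B] (p : ℕ) (hp : p.Prime)
    (w gr : ℕ → A)
    (hw : ∀ n, w (n + 1) ^ p = w n) (hgr : ∀ n, gr (n + 1) ^ p = gr n)
    (hroot : ∀ a : A, (p : A) ∣ a ^ p → w 1 ∣ a) (j : ℕ)
    (hreg : ∀ n x, w n ^ j ∣ gr n * x → w n ^ j ∣ x)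
    (hAW : ∀ a : A, ∀ n : ℕ, 0 < n → ∃ b c : A, w n * gr n * a - b ^ p = p * c)
    (hinj : Function.Injective (algebraMap A B))
    (t : ℕ → B) (htu : ∀ n, IsUnit (t n)) (htp : ∀ n, t (n + 1) ^ p = t n)
    (ht : ∀ n, algebraMap A B (gr n) * t n = algebraMap A B (w n ^ j))
    (S : Subalgebra A B) (hS : ∀ n, t n ∈ S)
    (hS' : ∀ x ∈ S, ∃ n, ∀ N, n ≤ N → ∃ F : A[X], x = aeval (t N) F)
    (k : ℕ) (hk : 0 < k) (x : B) (hx : x ∈ S) (y : B) (hy : y ∈ S)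
    (hxy : x ^ p = algebraMap A B p * y) :
    ∃ z ∈ S, algebraMap A B (w (k + 1) * gr (k + 1)) * x = algebraMap A B (w 1) * z := by
  have hSF : ∀ n (F : A[X]), aeval (t n) F ∈ S := fun n F => by
    exact Algebra.adjoin_le (Set.singleton_subset_iff.2 (hS n)) (aeval_mem_adjoin_singleton A (t n))
  obtain ⟨n, hn⟩ := hS' x hx
  obtain ⟨F, hF⟩ := hn (n + 1) (by omega)
  obtain ⟨Ft, H, hFH, hFt⟩ := aux_frob p hp F
  have h1 : aeval (t n) Ft = algebraMap A B p * (y - aeval (t (n + 1)) H) := by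
    have := congrArg (aeval (t (n + 1))) hFH
    rw [map_pow, ← hF, hxy, map_add, expand_aeval, htp, map_mul, aeval_C] at this
    linear_combination -this
  obtain ⟨N', hN'⟩ := hS' _ (sub_mem hy (hSF (n + 1) H))
  obtain ⟨l, hl⟩ : ∃ l, N' ≤ n + l := ⟨N', by omega⟩
  obtain ⟨G, hG⟩ := hN' _ hl
  have he : 0 < p ^ l := pow_pos hp.pos l
  have htl : ∀ n, t (n + l) ^ p ^ l = t n := aux_pow p t htp l
  have hF' : x = aeval (t (n + l + 1)) (expand A (p ^ l) F) := by
    rw [expand_aeval, show n + l + 1 = n + 1 + l by ring, htl, hF]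
  have hFt' : ∀ i, ∃ c, (expand A (p ^ l) Ft).coeff i = (expand A (p ^ l) F).coeff i ^ p + p * c := by
    intro i
    rw [coeff_expand he, coeff_expand he]
    split_ifs
    · exact hFt _
    · exact ⟨0, by simp [hp.ne_zero]⟩
  have h2 : (C (gr (n + l)) * X - C (w (n + l) ^ j)) ∣ expand A (p ^ l) Ft - C (p : A) * G := by
    refine aux_ker _ _ (t (n + l)) hinj (htu _) (ht _) (hreg _) _ _ le_rfl ?_
    rw [map_sub, expand_aeval, htl, h1, hG, map_mul, aeval_C, sub_self]
  generalize expand A (p ^ l) F = F' at *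
  generalize expand A (p ^ l) Ft = Ft' at *
  generalize n + l = m at *
  obtain ⟨Q, hQ⟩ := h2
  have hD : ∃ D : A[X], ∀ i, ∃ e, w k * gr k * Q.coeff i = D.coeff i ^ p + p * e := by
    choose b c hbc using fun i => hAW (Q.coeff i) k hk
    refine ⟨∑ i ∈ Finset.range (Q.natDegree + 1), monomial i (b i), fun i => ?_⟩
    rw [finsetSum_coeff]
    simp only [coeff_monomial, Finset.sum_ite_eq', Finset.mem_range]
    split_ifs with h
    · exact ⟨c i, by linear_combination hbc i⟩
    · rw [coeff_eq_zero_of_natDegree_lt (by omega)]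
      exact ⟨0, by simp [hp.ne_zero]⟩
  obtain ⟨D, hD⟩ := hD
  have hXD : ∀ i, ∃ e, w k * gr k * (X * Q).coeff i = (X * D).coeff i ^ p + p * e := by
    intro i
    cases i with
    | zero => exact ⟨0, by simp [hp.ne_zero]⟩
    | succ i => rw [coeff_X_mul, coeff_X_mul]; exact hD i
  have h3 : C (w 1) ∣ C (w (k + 1) * gr (k + 1)) * F' -
      (C (gr (m + 1)) * X - C (w (m + 1) ^ j)) * D := by
    rw [C_dvd_iff_dvd_coeff]
    intro i
    apply hroot
    have e1 : (C (w (k + 1) * gr (k + 1)) * F' -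
      (C (gr (m + 1)) * X - C (w (m + 1) ^ j)) * D).coeff i =
      w (k + 1) * gr (k + 1) * F'.coeff i -
        (gr (m + 1) * (X * D).coeff i - w (m + 1) ^ j * D.coeff i) := by
      rw [sub_mul, mul_assoc (C (gr (m + 1)))]
      simp only [coeff_sub, coeff_C_mul]
    rw [e1]
    have e2 := congrArg (fun P => P.coeff i) hQ
    simp only [sub_mul, mul_assoc (C (gr m)), coeff_sub, coeff_C_mul] at e2
    obtain ⟨c1, hc1⟩ := aux_sub_pow p hp (w (k + 1) * gr (k + 1) * F'.coeff i)
      (gr (m + 1) * (X * D).coeff i - w (m + 1) ^ j * D.coeff i)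
    obtain ⟨c2, hc2⟩ := aux_sub_pow p hp (gr (m + 1) * (X * D).coeff i)
      (w (m + 1) ^ j * D.coeff i)
    obtain ⟨c3, hc3⟩ := hFt' i
    obtain ⟨c4, hc4⟩ := hXD i
    obtain ⟨c5, hc5⟩ := hD i
    rw [hc1, hc2]
    simp only [mul_pow, hw, hgr, pow_right_comm _ j p]
    refine ⟨c1 - c2 - w k * gr k * c3 + w k * gr k * G.coeff i
      + gr m * c4 - w m ^ j * c5, ?_⟩
    linear_combination (-(w k * gr k)) * hc3 + (w k * gr k) * e2 + gr m * hc4 - w m ^ j * hc5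
  obtain ⟨f, hf⟩ := h3
  refine ⟨aeval (t (m + 1)) f, hSF _ _, ?_⟩
  have h4 := congrArg (aeval (t (m + 1))) hf
  simp only [map_sub, map_mul, aeval_C, aeval_X, ← hF', ht] at h4
  simp only [map_mul]
  linear_combination h4

theorem aux_mul_mem {A B : Type*} [CommRing A] [CommRing B] [Algebra A B] (S : Subalgebra A B)
    {a b : A} (h : a ∣ b) {x : B} (hx : algebraMap A B a * x ∈ S) : algebraMap A B b * x ∈ S := by
  obtain ⟨c, rfl⟩ := h
  rw [mul_comm a c, map_mul, mul_assoc]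
  exact mul_mem (S.algebraMap_mem c) hx

theorem aux_R {A B : Type*} [CommRing A] [CommRing B] [Algebra A B] (p : ℕ) (hp : p.Prime)
    (q : ℕ → A) (hq : ∀ n, q (n + 1) ^ p = q n) (w : A) (hw : w ^ p = p)
    (hwu : IsUnit (algebraMap A B w)) (S : Subalgebra A B)
    (hloc : ∀ x : B, ∃ M : ℕ, algebraMap A B w ^ M * x ∈ S)
    (hK : ∀ k, 0 < k → ∀ x ∈ S, ∀ y ∈ S, x ^ p = algebraMap A B p * y →
      ∃ z ∈ S, algebraMap A B (q (k + 1)) * x = algebraMap A B w * z)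
    (x : B) (hx : x ^ p ∈ S) (k : ℕ) : algebraMap A B (q k) * x ∈ S := by
  obtain ⟨M, hM⟩ := hloc x
  have key : ∀ (k : ℕ), 0 < k → ∀ (M : ℕ) (x : B), x ^ p ∈ S → algebraMap A B w ^ M * x ∈ S →
      algebraMap A B (q (k + 1)) ^ M * x ∈ S := by
    intro k hk M
    induction M with
    | zero => intro x _ h; simpa using h
    | succ M ih =>
      intro x hx hM
      have hxp : ∀ a : A, (algebraMap A B a * x) ^ p ∈ S := fun a => by
        rw [mul_pow, ← map_pow]; exact mul_mem (S.algebraMap_mem _) hx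
      obtain ⟨z, hz, h⟩ := hK k hk _ hM (algebraMap A B p ^ M * x ^ p)
        (mul_mem (pow_mem (S.algebraMap_mem _) _) hx) (by
          rw [mul_pow, ← hw, map_pow]; ring)
      rw [pow_succ, mul_assoc]
      apply ih _ (hxp _)
      have : algebraMap A B w ^ M * (algebraMap A B (q (k + 1)) * x) = z := by
        apply hwu.mul_left_cancel
        rw [← h]; ring
      rwa [this]
  have h := key (k + 1 + M) (by omega) M x hx hM
  rw [← map_pow] at h
  refine aux_mul_mem S ?_ h
  rw [show k + 1 + M + 1 = k + (M + 2) by ring, ← aux_pow p q hq (M + 2) k]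
  apply pow_dvd_pow
  have := Nat.lt_pow_self hp.one_lt (n := M + 2)
  omega

theorem aux_R' {A B : Type*} [CommRing A] [CommRing B] [Algebra A B] (p : ℕ) (hp : p.Prime)
    (q : ℕ → A) (hq : ∀ n, q (n + 1) ^ p = q n) (S : Subalgebra A B)
    (hR : ∀ x : B, x ^ p ∈ S → ∀ k, algebraMap A B (q k) * x ∈ S) (n : ℕ) :
    ∀ x : B, x ^ p ^ n ∈ S → ∀ k, algebraMap A B (q k) * x ∈ S := by
  induction n with
  | zero => intro x hx k; exact mul_mem (S.algebraMap_mem _) (by simpa using hx)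
  | succ n ih =>
    intro x hx k
    rw [pow_succ', pow_mul] at hx
    have h1 := ih _ hx k
    rw [← hq, map_pow, ← mul_pow] at h1
    have h2 := hR _ h1 (k + 1)
    rw [← mul_assoc, ← map_mul] at h2
    refine aux_mul_mem S ?_ h2
    rw [← hq k, ← pow_two]
    exact pow_dvd_pow _ hp.two_le

/-- **Witt-perfect Riemann extension theorem, part (a).**  Under the hypotheses
of Theorem 4.7 of Nakazato–Shimomoto, for each `j > 0` the inclusion
`A[(p^j/g)^{1/p^∞}] ⊆ A^{j∘}` is a `(pg)^{1/p^∞}`-almost isomorphism, where `A^{j∘}` is the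
complete integral closure of `A[p^j/g]` in `A[1/(pg)]` with respect to powers of `p`. -/
theorem wittPerfectRiemannExtension_almost_iso.{u}
    (p : ℕ) (hp : p.Prime)
    (V : Type u) [CommRing V] [IsDomain V] [ValuationRing V]
    (hVdim : ringKrullDim V = 1)
    (hVtf : (p : V) ∈ nonZeroDivisors V)
    (hVW : IsWittPerfect p V)
    (prV : ℕ → V) (hprV0 : prV 0 = (p : V)) (hprV : ∀ n, prV (n + 1) ^ p = prV n)
    (A : Type u) [CommRing A] [Algebra V A] [Module.Flat V A]
    (hAtf : (p : A) ∈ nonZeroDivisors A)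
    (g : A) (hg : g ∈ nonZeroDivisors A)
    (gr : ℕ → A) (hgr0 : gr 0 = g) (hgr : ∀ n, gr (n + 1) ^ p = gr n)
    -- (1) A is p-adically Zariskian and completely integrally closed in A[1/p]
    (hZar : (p : A) ∈ (⊥ : Ideal A).jacobson)
    (Ap : Type u) [CommRing Ap] [Algebra A Ap] [IsLocalization.Away (p : A) Ap]
    (hcic : IsCompletelyIntegrallyClosedIn A Ap)
    -- (2) A is (pg)^{1/p^∞}-almost Witt-perfect and integral over a Noetherian subring
    (hAWP : IsAlmostWittPerfect p (fun n => algebraMap V A (prV n) * gr n))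
    (hNoeth : ∃ R : Subring A, IsNoetherianRing ↥R ∧ ∀ x : A, IsIntegral ↥R x)
    -- (3) (p, g) is a regular sequence on A
    (hreg : ∀ x : A, g * x ∈ Ideal.span {(p : A)} → x ∈ Ideal.span {(p : A)})
    -- the localization A[1/(pg)] and the inverses of the p-power roots of g in it
    (Apg : Type u) [CommRing Apg] [Algebra A Apg] [IsLocalization.Away ((p : A) * g) Apg]
    (ginv : ℕ → Apg) (hginv : ∀ n, ginv n * algebraMap A Apg (gr n) = 1) :
    ∀ j : ℕ, 0 < j →
      -- A[(p^j/g)^{1/p^∞}] ⊆ A^{j∘}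
      ((Algebra.adjoin A
          (Set.range fun n : ℕ =>
            (algebraMap A Apg (algebraMap V A (prV n))) ^ j * ginv n) : Subalgebra A Apg) : Set Apg)
        ⊆ {x : Apg | ∃ m : ℕ, ∀ n : ℕ,
              (algebraMap A Apg (p : A)) ^ m * x ^ n ∈
                Algebra.adjoin A {(algebraMap A Apg (p : A)) ^ j * ginv 0}} ∧
      -- (pg)^{1/p^n} · A^{j∘} ⊆ A[(p^j/g)^{1/p^∞}] for every n > 0
      (∀ n : ℕ, 0 < n →
        ∀ x ∈ {x : Apg | ∃ m : ℕ, ∀ k : ℕ,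
              (algebraMap A Apg (p : A)) ^ m * x ^ k ∈
                Algebra.adjoin A {(algebraMap A Apg (p : A)) ^ j * ginv 0}},
          algebraMap A Apg (algebraMap V A (prV n) * gr n) * x ∈
            Algebra.adjoin A
              (Set.range fun n : ℕ =>
                (algebraMap A Apg (algebraMap V A (prV n))) ^ j * ginv n)) := by
  intro j hj
  obtain ⟨w, hwdef⟩ : ∃ w : ℕ → A, ∀ n, algebraMap V A (prV n) = w n := ⟨_, fun _ => rfl⟩
  have hw0 : w 0 = p := by rw [← hwdef, hprV0, map_natCast]
  have hw : ∀ n, w (n + 1) ^ p = w n := fun n => by rw [← hwdef, ← hwdef, ← map_pow, hprV]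
  simp only [hwdef] at hAWP ⊢
  obtain ⟨t, htdef⟩ : ∃ t : ℕ → Apg, ∀ n, algebraMap A Apg (w n) ^ j * ginv n = t n :=
    ⟨_, fun _ => rfl⟩
  have ht0 : algebraMap A Apg (p : A) ^ j * ginv 0 = t 0 := by rw [← htdef, hw0]
  simp only [htdef, ht0]
  have hpg : (p : A) * g ∈ nonZeroDivisors A := mul_mem hAtf hg
  have hinj : Function.Injective (algebraMap A Apg) :=
    IsLocalization.injective Apg (Submonoid.powers_le.mpr hpg)
  have hpgu : IsUnit (algebraMap A Apg ((p : A) * g)) := IsLocalization.Away.algebraMap_isUnit _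
  have hpu : IsUnit (algebraMap A Apg (p : A)) := by
    rw [map_mul] at hpgu; exact isUnit_of_mul_isUnit_left hpgu
  have hwn : ∀ n, w n ^ p ^ n = p := fun n => by
    have := aux_pow p w hw n 0
    rwa [zero_add, hw0] at this
  have hgn : ∀ n, gr n ^ p ^ n = gr 0 := fun n => by
    have := aux_pow p gr hgr n 0
    rwa [zero_add] at this
  have hwu : ∀ n, IsUnit (algebraMap A Apg (w n)) := fun n => by
    rw [← hwn n, map_pow] at hpu
    exact (isUnit_pow_iff (pow_pos hp.pos n).ne').1 hpu
  have hgu : ∀ n, IsUnit (algebraMap A Apg (gr n)) := fun n =>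
    IsUnit.of_mul_eq_one (ginv n) (by rw [mul_comm]; exact hginv n)
  have hginvu : ∀ n, IsUnit (ginv n) := fun n => IsUnit.of_mul_eq_one _ (hginv n)
  have htu : ∀ n, IsUnit (t n) := fun n => by
    rw [← htdef]; exact ((hwu n).pow j).mul (hginvu n)
  have ht : ∀ n, algebraMap A Apg (gr n) * t n = algebraMap A Apg (w n ^ j) := fun n => by
    rw [← htdef, map_pow]
    linear_combination (algebraMap A Apg (w n)) ^ j * hginv n
  have htp : ∀ n, t (n + 1) ^ p = t n := fun n => by
    apply (hgu n).mul_left_cancel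
    rw [ht, ← hgr, map_pow, ← mul_pow, ht, ← map_pow, pow_right_comm, hw]
  obtain ⟨S, hSdef⟩ : ∃ S : Subalgebra A Apg, S = Algebra.adjoin A (Set.range t) := ⟨_, rfl⟩
  have hrange : (Set.range fun n => t n) = Set.range t := rfl
  rw [hrange, ← hSdef]
  have hS : ∀ n, t n ∈ S := fun n => hSdef ▸ Algebra.subset_adjoin ⟨n, rfl⟩
  have hmono : ∀ n l, Algebra.adjoin A {t n} ≤ Algebra.adjoin A {t (n + l)} := fun n l => by
    apply Algebra.adjoin_le
    rw [Set.singleton_subset_iff, ← aux_pow p t htp l n]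
    exact pow_mem (Algebra.self_mem_adjoin_singleton A _) _
  have hmono' : ∀ n N, n ≤ N → Algebra.adjoin A {t n} ≤ Algebra.adjoin A {t N} := by
    intro n N h
    obtain ⟨l, rfl⟩ := Nat.exists_eq_add_of_le h
    exact hmono n l
  have hS1 : ∀ x ∈ S, ∃ n, x ∈ Algebra.adjoin A {t n} := by
    intro x hx
    rw [hSdef] at hx
    induction hx using Algebra.adjoin_induction with
    | mem x hx => obtain ⟨n, rfl⟩ := hx; exact ⟨n, Algebra.self_mem_adjoin_singleton A _⟩
    | algebraMap r => exact ⟨0, Subalgebra.algebraMap_mem _ r⟩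
    | add x y _ _ hx hy =>
      obtain ⟨n, hn⟩ := hx
      obtain ⟨m, hm⟩ := hy
      exact ⟨max n m, add_mem (hmono' _ _ (le_max_left _ _) hn) (hmono' _ _ (le_max_right _ _) hm)⟩
    | mul x y _ _ hx hy =>
      obtain ⟨n, hn⟩ := hx
      obtain ⟨m, hm⟩ := hy
      exact ⟨max n m, mul_mem (hmono' _ _ (le_max_left _ _) hn) (hmono' _ _ (le_max_right _ _) hm)⟩
  have hS' : ∀ x ∈ S, ∃ n, ∀ N, n ≤ N → ∃ F : Polynomial A, x = Polynomial.aeval (t N) F := by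
    intro x hx
    obtain ⟨n, hn⟩ := hS1 x hx
    refine ⟨n, fun N hN => ?_⟩
    have := hmono' n N hN hn
    rw [Algebra.adjoin_singleton_eq_range_aeval] at this
    obtain ⟨F, hF⟩ := this
    exact ⟨F, hF.symm⟩
  have h0S : Algebra.adjoin A {t 0} ≤ S :=
    Algebra.adjoin_le (Set.singleton_subset_iff.2 (hS 0))
  constructor
  · have key : ∀ x ∈ S, algebraMap A Apg (p : A) ^ j * x ∈ Algebra.adjoin A {t 0} := by
      intro x hx
      obtain ⟨n, hn⟩ := hS' x hx
      obtain ⟨F, rfl⟩ := hn n le_rfl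
      clear hx hn
      induction F using Polynomial.induction_on' with
      | add P Q hP hQ => rw [map_add, mul_add]; exact add_mem hP hQ
      | monomial i a =>
        rw [Polynomial.aeval_monomial, mul_left_comm]
        refine mul_mem (Subalgebra.algebraMap_mem _ a) ?_
        have hpos : 0 < p ^ n := pow_pos hp.pos n
        have htn : t n ^ p ^ n = t 0 := by
          have := aux_pow p t htp n 0
          rwa [zero_add] at this
        rw [← Nat.div_add_mod i (p ^ n), pow_add, pow_mul, htn, mul_left_comm]
        refine mul_mem (pow_mem (Algebra.self_mem_adjoin_singleton A _) _) ?_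
        have hlt : i % p ^ n < p ^ n := Nat.mod_lt _ hpos
        generalize i % p ^ n = r at hlt
        obtain ⟨e, he⟩ := Nat.exists_eq_add_of_lt hlt
        have e1 : algebraMap A Apg (p : A) ^ j * t n ^ r =
            algebraMap A Apg ((w n ^ j) ^ r * gr n ^ (e + 1)) * t 0 := by
          have h0 : algebraMap A Apg (p : A) ^ j = algebraMap A Apg (gr n ^ (r + e + 1)) * t 0 := by
            rw [← he, hgn, ht, hw0, map_pow]
          rw [h0, map_mul, map_pow _ (w n ^ j), ← ht]
          simp only [map_pow]
          ring
        rw [e1]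
        exact mul_mem (Subalgebra.algebraMap_mem _ _) (Algebra.self_mem_adjoin_singleton A _)
    intro x hx
    exact ⟨j, fun n => key _ (pow_mem hx n)⟩
  · have hroot : ∀ a : A, (p : A) ∣ a ^ p → w 1 ∣ a := fun a ha =>
      aux_root (Ap := Ap) p hp hAtf hcic (w 1) (by rw [hw 0, hw0]) a ha
    have hreg' : ∀ x : A, (p : A) ∣ gr 0 * x → (p : A) ∣ x := fun x hx => by
      rw [hgr0] at hx
      exact Ideal.mem_span_singleton.1 (hreg x (Ideal.mem_span_singleton.2 hx))
    have hw1 : w 1 ^ p = p := by rw [hw 0, hw0]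
    have hq : ∀ n, (fun n => w n * gr n) (n + 1) ^ p = (fun n => w n * gr n) n := fun n => by
      simp only [mul_pow, hw, hgr]
    have hloc : ∀ x : Apg, ∃ M : ℕ, algebraMap A Apg (w 1) ^ M * x ∈ S := by
      intro x
      obtain ⟨⟨a, ⟨_, m, rfl⟩⟩, ham⟩ := IsLocalization.surj (Submonoid.powers ((p : A) * g)) x
      refine ⟨p * (m + j * m), ?_⟩
      have e1 : algebraMap A Apg (w 1) ^ (p * (m + j * m)) * x
          = algebraMap A Apg a * t 0 ^ m := by
        rw [pow_mul, ← map_pow, hw1]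
        simp only [map_pow, map_mul] at ham
        have h0 := ht 0
        rw [hgr0, hw0, map_pow] at h0
        rw [pow_add, pow_mul, ← h0, ← ham]
        ring
      rw [e1]
      exact mul_mem (S.algebraMap_mem _) (pow_mem (hS 0) _)
    have hK := aux_K p hp w gr hw hgr hroot j
      (aux_reg p w gr hw0 hw hgr hp hAtf hreg' j) hAWP.1 hinj t htu htp ht S hS hS'
    have hR := aux_R p hp (fun n => w n * gr n) hq (w 1) hw1 (hwu 1) S hloc
      (fun k hk x hx y hy h => hK k hk x hx y hy h)
    have hR' := aux_R' p hp (fun n => w n * gr n) hq S hR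
    rintro n hn x ⟨m, hm⟩
    have h1 : (algebraMap A Apg (w (n + 1 + m) ^ m) * x) ^ p ^ (n + 1 + m) ∈ S := by
      rw [mul_pow, ← map_pow, pow_right_comm, hwn, map_pow]
      exact h0S (hm _)
    have h2 := hR' _ _ h1 (n + 1)
    rw [← mul_assoc, ← map_mul] at h2
    refine aux_mul_mem S ?_ h2
    have d1 : w (n + 1 + m) ^ m ∣ w (n + 1) := by
      rw [← aux_pow p w hw m (n + 1)]
      exact pow_dvd_pow _ (Nat.lt_pow_self hp.one_lt).le
    have d2 : w (n + 1) * w (n + 1) ∣ w n := by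
      rw [← hw n, ← pow_two]; exact pow_dvd_pow _ hp.two_le
    have d3 : gr (n + 1) ∣ gr n := by
      rw [← hgr n]; exact dvd_pow_self _ hp.ne_zero
    calc w (n + 1) * gr (n + 1) * w (n + 1 + m) ^ m ∣ w (n + 1) * gr (n + 1) * w (n + 1) :=
          mul_dvd_mul_left _ d1
      _ = w (n + 1) * w (n + 1) * gr (n + 1) := by ring
      _ ∣ w n * gr n := mul_dvd_mul d2 d3
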